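/- Let T be a tournament and let c ≥ d ≥ 0 be integers with c ≥ 1. Suppose v_0, v_1, …, v_k (with k ≥ 1 and v_0 ≠ v_k) are the vertices of a shortest directed path from v_0 to v_k in T, that the dichromatic number of T[N⁺(v_0) ∪ N⁻(v_k)] is at most c, and that for every 1 ≤ i ≤ k the dichromatic number of T[N(e_i)] is at most d. Then the dichromatic number of T is at most c + 4d. -/

import Mathlib

/-- A tournament on a vertex type `V`: for every two distinct vertices exactly one
of the two possible arcs is present, and there are no loops. -/
structure Tournament (V : Type) where
  arc : V → V → Prop
  asymm : ∀ u v, arc u v → ¬ arc v u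
  total : ∀ u v, u ≠ v → arc u v ∨ arc v u

namespace Tournament

variable {V : Type}

/-- A set of vertices is transitive (acyclic) if it contains no directed triangle. -/
def IsTransitiveSet (T : Tournament V) (S : Set V) : Prop :=
  ∀ a ∈ S, ∀ b ∈ S, ∀ c ∈ S, ¬ (T.arc a b ∧ T.arc b c ∧ T.arc c a)

/-- Out-neighborhood `N⁺(v)`. -/
def outN (T : Tournament V) (v : V) : Set V := {w | T.arc v w}

/-- In-neighborhood `N⁻(v)`. -/
def inN (T : Tournament V) (v : V) : Set V := {w | T.arc w v}

/-- Arc neighborhood `N(uv)` of an arc `u → v`: vertices forming a directed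
triangle with the arc. -/
def arcNbhd (T : Tournament V) (u v : V) : Set V := {w | T.arc v w ∧ T.arc w u}

/-- `T.ColorableOn S k` means the induced subtournament `T[S]` can be partitioned
into at most `k` transitive sets. -/
def ColorableOn (T : Tournament V) (S : Set V) (k : ℕ) : Prop :=
  ∃ f : V → ℕ, (∀ v ∈ S, f v < k) ∧ ∀ i : ℕ, T.IsTransitiveSet {v | v ∈ S ∧ f v = i}

/-- The dichromatic number of `T`: the least `k` such that `V(T)` can be
partitioned into `k` transitive sets. -/
noncomputable def dichromaticNumber (T : Tournament V) : ℕ :=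
  sInf {k | T.ColorableOn Set.univ k}

/-- An arc `u → v` is heavy if `N(uv)` contains a directed triangle. -/
def IsHeavy (T : Tournament V) (u v : V) : Prop :=
  T.arc u v ∧ ∃ a b c,
    a ∈ T.arcNbhd u v ∧ b ∈ T.arcNbhd u v ∧ c ∈ T.arcNbhd u v ∧
    T.arc a b ∧ T.arc b c ∧ T.arc c a

/-- A tournament is light if it has no heavy arc. -/
def IsLight (T : Tournament V) : Prop := ∀ u v, ¬ T.IsHeavy u v

/-- The induced subtournament `T[S]` is light: for every arc within `S`, the part
of its arc neighborhood inside `S` is transitive. -/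
def LightOn (T : Tournament V) (S : Set V) : Prop :=
  ∀ u ∈ S, ∀ v ∈ S, T.arc u v → T.IsTransitiveSet (T.arcNbhd u v ∩ S)

/-- `S` is the vertex set of a directed triangle. -/
def IsTriangle (T : Tournament V) (S : Set V) : Prop :=
  ∃ a b c, S = {a, b, c} ∧ T.arc a b ∧ T.arc b c ∧ T.arc c a

/-- `S ⇒ U`: every arc between `S` and `U` is directed from `S` to `U`. -/
def Beats (T : Tournament V) (S U : Set V) : Prop :=
  ∀ s ∈ S, ∀ u ∈ U, T.arc s u

/-- `X 0, …, X (L-1)` is a `C₃`-chain of length `L`: pairwise vertex-disjoint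
directed triangles with `X i ⇒ X (i+1)`. -/
def IsC3Chain (T : Tournament V) (X : ℕ → Set V) (L : ℕ) : Prop :=
  (∀ i < L, T.IsTriangle (X i)) ∧
  (∀ i < L, ∀ j < L, i ≠ j → Disjoint (X i) (X j)) ∧
  (∀ i, i + 1 < L → T.Beats (X i) (X (i + 1)))

/-- `v 0, …, v k` are the vertices of a shortest directed path from `v 0` to `v k`:
consecutive arcs are present, and no directed path (walk) from `v 0` to `v k`
has fewer than `k` arcs. -/
def IsShortestPath (T : Tournament V) (v : ℕ → V) (k : ℕ) : Prop :=
  (∀ i < k, T.arc (v i) (v (i + 1))) ∧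
  (∀ m : ℕ, ∀ p : ℕ → V, p 0 = v 0 → p m = v k →
    (∀ i < m, T.arc (p i) (p (i + 1))) → k ≤ m)

/-- The path decomposition `D 0, …, D (k+1)` associated to the path `v 0, …, v k`:
`D 0 = N⁺(v 0)`, `D i = N(e i) \ (D 0 ∪ ⋯ ∪ D (i-1))` for `1 ≤ i ≤ k` where
`e i` is the arc `v (i-1) → v i`, and `D (k+1) = N⁻(v k) \ (D 0 ∪ ⋯ ∪ D k)`. -/
def PathDecomp (T : Tournament V) (v : ℕ → V) (k : ℕ) (D : ℕ → Set V) : Prop :=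
  D 0 = T.outN (v 0) ∧
  (∀ i, 1 ≤ i → i ≤ k → D i = T.arcNbhd (v (i - 1)) (v i) \ ⋃ j < i, D j) ∧
  D (k + 1) = T.inN (v k) \ ⋃ j < k + 1, D j

end Tournament

/-!
Sort the vertices of `T` into cells along the path: `N⁺(v₀)`, then `N(e₁), …, N(eₖ)`, then
`N⁻(vₖ)`. If `x → y` with `x` in cell `i` and `y` in cell `j`, then `vᵢ → x → y → vⱼ₋₁` is a walk
of length `3`, so `j ≤ i + 4` because the path is shortest.

Split the `c`-coloring of the two end cells into a `d`-colored part and a `(c - d)`-colored part.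
Away from the latter every cell is `d`-colorable. Coloring there by the `d`-coloring of the cell
together with its index modulo `5` uses `5d` colors, and an arc inside a color class never increases
the index, so a monochromatic triangle would lie in one cell. The total is
`5d + (c - d) = c + 4d`.
-/

namespace Tournament

variable {V : Type} {T : Tournament V}

section Coloring

variable {S S' : Set V} {m n d : ℕ}

lemma IsTransitiveSet.mono (hS : T.IsTransitiveSet S) (h : S' ⊆ S) : T.IsTransitiveSet S' :=
  fun a ha b hb c hc => hS a (h ha) b (h hb) c (h hc)

lemma IsTransitiveSet.of_level {α : Type*} [PartialOrder α] {level : V → α}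
    (harc : ∀ x ∈ S, ∀ y ∈ S, T.arc x y → level y ≤ level x)
    (hlevel : ∀ a, T.IsTransitiveSet {x ∈ S | level x = a}) : T.IsTransitiveSet S := by
  rintro x hx y hy z hz ⟨hxy, hyz, hzx⟩
  have hyx := harc x hx y hy hxy
  have hzy := harc y hy z hz hyz
  have hxz := harc z hz x hx hzx
  exact hlevel (level x) x ⟨hx, rfl⟩ y ⟨hy, hyx.antisymm (hxz.trans hzy)⟩
    z ⟨hz, (hzy.trans hyx).antisymm hxz⟩ ⟨hxy, hyz, hzx⟩

lemma ColorableOn.mono (hS : T.ColorableOn S n) (h : S' ⊆ S) : T.ColorableOn S' n := by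
  obtain ⟨f, hlt, htrans⟩ := hS
  exact ⟨f, fun w hw => hlt w (h hw), fun i => (htrans i).mono fun _ hw => ⟨h hw.1, hw.2⟩⟩

lemma ColorableOn.union (hS : T.ColorableOn S m) (hS' : T.ColorableOn S' n) :
    T.ColorableOn (S ∪ S') (m + n) := by
  classical
  obtain ⟨f, hf, hftrans⟩ := hS
  obtain ⟨g, hg, hgtrans⟩ := hS'
  refine ⟨fun w => if w ∈ S then f w else m + g w, fun w hw => ?_, fun i => ?_⟩
  · grind
  · rcases lt_or_ge i m with hi | hi
    · exact (hftrans i).mono fun w hw => by grind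
    · exact (hgtrans (i - m)).mono fun w hw => by grind

lemma ColorableOn.exists_union_eq (hS : T.ColorableOn S (m + n)) :
    ∃ A B, A ∪ B = S ∧ T.ColorableOn A m ∧ T.ColorableOn B n := by
  obtain ⟨f, hlt, htrans⟩ := hS
  refine ⟨{w ∈ S | f w < m}, {w ∈ S | m ≤ f w}, ?_, ⟨f, fun w hw => hw.2, fun i => ?_⟩,
    ⟨fun w => f w - m, fun w hw => ?_, fun i => ?_⟩⟩
  · ext w
    grind
  · exact (htrans i).mono fun w hw => ⟨hw.1.1, hw.2⟩
  · grind
  · exact (htrans (i + m)).mono fun w hw => by grind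

lemma ColorableOn.of_level {level : V → ℕ}
    (harc : ∀ x ∈ S, ∀ y ∈ S, T.arc x y → level y ≤ level x + m)
    (hlevel : ∀ i, T.ColorableOn {x ∈ S | level x = i} d) : T.ColorableOn S ((m + 1) * d) := by
  choose f hlt htrans using hlevel
  obtain ⟨color, hdiv, hmod⟩ : ∃ color : V → ℕ, (∀ w, color w / (m + 1) = f (level w) w) ∧
      ∀ w, color w % (m + 1) = level w % (m + 1) := by
    refine ⟨fun w => (m + 1) * f (level w) w + level w % (m + 1), fun w => ?_, fun w => ?_⟩
    · rw [Nat.mul_add_div m.succ_pos, Nat.div_eq_of_lt (Nat.mod_lt _ m.succ_pos), add_zero]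
    · rw [Nat.mul_add_mod, Nat.mod_mod]
  refine ⟨color, fun w hw => ?_, fun i => .of_level (level := level) ?_ fun j => ?_⟩
  · rw [mul_comm, ← Nat.div_lt_iff_lt_mul m.succ_pos, hdiv]
    exact hlt _ w ⟨hw, rfl⟩
  · rintro x ⟨hx, hxi⟩ y ⟨hy, hyi⟩ hxy
    have hcongr : level x ≡ level y [MOD m + 1] := by
      rw [Nat.ModEq, ← hmod x, ← hmod y, hxi, hyi]
    by_contra! hxy_lt
    have hge := hcongr.add_le_of_lt hxy_lt
    have hle := harc x hx y hy hxy
    omega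
  · refine (htrans j (i / (m + 1))).mono ?_
    rintro w ⟨⟨hw, hwi⟩, rfl⟩
    exact ⟨⟨hw, rfl⟩, by rw [← hdiv w, hwi]⟩

end Coloring

section Walk

variable {x y z : V} {m n : ℕ}

/-- There is a directed walk with exactly `m` arcs from `x` to `y`. The walk is encoded, as in
`IsShortestPath`, by a sequence of which only the terms `0, …, m` matter. -/
def HasWalk (T : Tournament V) (m : ℕ) (x y : V) : Prop :=
  ∃ p : ℕ → V, p 0 = x ∧ p m = y ∧ ∀ i < m, T.arc (p i) (p (i + 1))

lemma HasWalk.of_arc (h : T.arc x y) : T.HasWalk 1 x y :=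
  ⟨fun i => if i = 0 then x else y, by simp, by simp, by simpa using h⟩

lemma HasWalk.trans (hxy : T.HasWalk m x y) (hyz : T.HasWalk n y z) : T.HasWalk (m + n) x z := by
  obtain ⟨p, rfl, hpm, hp⟩ := hxy
  obtain ⟨q, hq0, rfl, hq⟩ := hyz
  have hglue (i : ℕ) : (if m + i ≤ m then p (m + i) else q (m + i - m)) = q i := by
    rcases i with _ | i <;> simp [hpm, hq0]
  refine ⟨fun i => if i ≤ m then p i else q (i - m), by simp, hglue n, fun i hi => ?_⟩
  rcases lt_or_ge i m with him | him
  · simpa [him, him.le] using hp i him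
  · obtain ⟨j, rfl⟩ := Nat.exists_eq_add_of_le him
    simp only [add_assoc m j 1, hglue]
    exact hq j (by omega)

end Walk

section Path

variable {v : ℕ → V} {k i j m : ℕ} {x y : V}

lemma IsShortestPath.hasWalk (h : T.IsShortestPath v k) (hij : i ≤ j) (hj : j ≤ k) :
    T.HasWalk (j - i) (v i) (v j) :=
  ⟨fun n => v (i + n), rfl, by simp only [Nat.add_sub_cancel' hij],
    fun n hn => h.1 (i + n) (by omega)⟩

lemma IsShortestPath.le_add_of_hasWalk (h : T.IsShortestPath v k) (hi : i ≤ k) (hj : j ≤ k)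
    (hw : T.HasWalk m (v i) (v j)) : j ≤ i + m := by
  obtain ⟨p, hp0, hpk, hp⟩ := ((h.hasWalk i.zero_le hi).trans hw).trans (h.hasWalk hj le_rfl)
  have := h.2 _ p hp0 hpk hp
  omega

/-- The cells `N⁺(v 0)`, `N(e 1)`, …, `N(e k)`, `N⁻(v k)` for `i = 0, 1, …, k, k + 1`, before they
are made disjoint as in `PathDecomp`; the conditions at the two ends are dropped where `v i` or
`v (i - 1)` does not exist, and cells with `i > k + 1` are empty. -/
def pathCell (T : Tournament V) (v : ℕ → V) (k i : ℕ) : Set V :=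
  {w | i ≤ k + 1 ∧ (i ≤ k → T.arc (v i) w) ∧ ∀ j, i = j + 1 → T.arc w (v j)}

lemma pathCell_subset_ends_or_arcNbhd (T : Tournament V) (v : ℕ → V) (k i : ℕ) :
    T.pathCell v k i ⊆ T.outN (v 0) ∪ T.inN (v k) ∨
      ∃ j < k, T.pathCell v k i ⊆ T.arcNbhd (v j) (v (j + 1)) := by
  rcases i with _ | j
  · exact .inl fun w hw => .inl (hw.2.1 k.zero_le)
  · rcases lt_or_ge j k with hj | hj
    · exact .inr ⟨j, hj, fun w hw => ⟨hw.2.1 hj, hw.2.2 j rfl⟩⟩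
    · refine .inl fun w hw => .inr (hw.2.2 k ?_)
      have := hw.1
      omega

lemma exists_mem_pathCell (hk : 1 ≤ k) (hv : ∀ i < k, T.arc (v i) (v (i + 1))) (w : V) :
    ∃ i, w ∈ T.pathCell v k i := by
  classical
  have hex : ∃ i, i = k + 1 ∨ T.arc (v i) w := ⟨k + 1, .inl rfl⟩
  have hle : Nat.find hex ≤ k + 1 := Nat.find_min' hex (.inl rfl)
  have hspec := Nat.find_spec hex
  refine ⟨Nat.find hex, hle, fun hlt => hspec.resolve_left (by omega), fun j hj => ?_⟩
  have hmin (i : ℕ) (hi : i ≤ j) : ¬ T.arc (v i) w :=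
    fun h => Nat.find_min hex (by omega) (.inr h)
  have hne : w ≠ v j := by
    rintro rfl
    rcases j with _ | j
    · rw [hj] at hspec
      exact T.asymm _ _ (hv 0 hk) (hspec.resolve_left (by omega))
    · exact hmin j (by omega) (hv j (by omega))
  exact (T.total _ _ hne).resolve_right (hmin j le_rfl)

lemma IsShortestPath.pathCell_index_le (h : T.IsShortestPath v k) (hx : x ∈ T.pathCell v k i)
    (hy : y ∈ T.pathCell v k j) (hxy : T.arc x y) : j ≤ i + 4 := by
  obtain ⟨hj, -, hyv⟩ := hy
  rcases j with _ | j
  · exact Nat.zero_le _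
  · rcases le_or_gt i k with hi | hi
    · have hwalk : T.HasWalk 3 (v i) (v j) :=
        ((HasWalk.of_arc (hx.2.1 hi)).trans (.of_arc hxy)).trans (.of_arc (hyv j rfl))
      have := h.le_add_of_hasWalk hi (by omega) hwalk
      omega
    · omega

end Path

end Tournament

open Tournament in
theorem stmt_2_general {V : Type} (T : Tournament V) (c d : ℕ) (hdc : d ≤ c)
    (k : ℕ) (hk : 1 ≤ k) (v : ℕ → V) (hpath : T.IsShortestPath v k)
    (hends : T.ColorableOn (T.outN (v 0) ∪ T.inN (v k)) c)
    (harcs : ∀ i, 1 ≤ i → i ≤ k → T.ColorableOn (T.arcNbhd (v (i - 1)) (v i)) d) :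
    T.ColorableOn Set.univ (c + 4 * d) := by
  obtain ⟨A, B, hAB, hA, hB⟩ : ∃ A B, A ∪ B = T.outN (v 0) ∪ T.inN (v k) ∧
      T.ColorableOn A d ∧ T.ColorableOn B (c - d) :=
    ColorableOn.exists_union_eq (by rwa [Nat.add_sub_cancel' hdc])
  choose level hmem using exists_mem_pathCell hk hpath.1
  have hlevel (i : ℕ) : T.ColorableOn {x ∈ Bᶜ | level x = i} d := by
    have hcell : {x ∈ Bᶜ | level x = i} ⊆ T.pathCell v k i := by
      rintro x ⟨-, rfl⟩
      exact hmem x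
    rcases T.pathCell_subset_ends_or_arcNbhd v k i with hi | ⟨j, hj, hi⟩
    · exact hA.mono fun x hx => (hAB.ge (hi (hcell hx))).resolve_right hx.1
    · exact (harcs (j + 1) (by omega) hj).mono (hcell.trans hi)
  have hcompl : T.ColorableOn Bᶜ ((4 + 1) * d) :=
    .of_level (fun x _ y _ => hpath.pathCell_index_le (hmem x) (hmem y)) hlevel
  have hcount : (4 + 1) * d + (c - d) = c + 4 * d := by omega
  simpa only [Set.compl_union_self, hcount] using hcompl.union hB

theorem stmt_2 {V : Type} [Fintype V] (T : Tournament V)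
    (c d : ℕ) (hdc : d ≤ c) (hc : 1 ≤ c)
    (k : ℕ) (hk : 1 ≤ k) (v : ℕ → V) (hne : v 0 ≠ v k)
    (hpath : T.IsShortestPath v k)
    (hends : T.ColorableOn (T.outN (v 0) ∪ T.inN (v k)) c)
    (harcs : ∀ i, 1 ≤ i → i ≤ k → T.ColorableOn (T.arcNbhd (v (i - 1)) (v i)) d) :
    T.ColorableOn Set.univ (c + 4 * d) :=
  stmt_2_general T c d hdc k hk v hpath hends harcs
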